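/- If u ∈ N(f)\{0} is a global maximizer of B̄ over N(f)\{0} and P ∈ cl(𝒫_u^+) satisfies B_u(P) = B̄(u), then P is a global maximizer of Q ↦ B(Q,ℰ) over 𝒫(Z), and B(P,ℰ) = B̄(u). -/

import Mathlib

/-!
Both `B(·, ℰ)` and `B_u` are gaps `H Q - min H`, the minimum being over the points of the simplex
that differ from `Q` by an element of a subspace: `N(f)` for the first, the line `ℝ ∙ u` for the
second. For `B(·, ℰ)` the Pythagorean identity gives `≥`, and Sion's minimax theorem applied to
`H R + ⟨θ, μ Q - μ R⟩` gives `≤`. Hence `B_u ≤ B(·, ℰ)` for `u ∈ N(f)`. Conversely, if `S` minimizes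
`H` over the `N(f)`-fibre of `Q`, then it also minimizes `H` along the direction `v = Q - S`, so
`B(Q, ℰ) = B_v(Q)`, and convexity of `H` puts `Q` on the positive side of `v`.
-/

open Matrix Set

section Convex

variable {E : Type*} [AddCommGroup E] [Module ℝ E]

theorem convexOn_closure_of_continuousOn [TopologicalSpace E] [IsTopologicalAddGroup E]
    [ContinuousSMul ℝ E] {s : Set E} {g : E → ℝ} (hg : ConvexOn ℝ s g)
    (hc : ContinuousOn g (closure s)) : ConvexOn ℝ (closure s) g := by
  refine ⟨hg.1.closure, fun x hx y hy a b ha hb hab ↦ ?_⟩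
  have hfst : MapsTo Prod.fst (closure (s ×ˢ s)) (closure s) := by
    rw [closure_prod_eq]; exact fun p hp ↦ hp.1
  have hsnd : MapsTo Prod.snd (closure (s ×ˢ s)) (closure s) := by
    rw [closure_prod_eq]; exact fun p hp ↦ hp.2
  have hcombo : MapsTo (fun p : E × E ↦ a • p.1 + b • p.2) (closure (s ×ˢ s)) (closure s) :=
    fun p hp ↦ hg.1.closure (hfst hp) (hsnd hp) ha hb hab
  refine le_on_closure (s := s ×ˢ s) (f := fun p ↦ g (a • p.1 + b • p.2))
    (g := fun p ↦ a • g p.1 + b • g p.2) (x := (x, y))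
    (fun p hp ↦ hg.2 hp.1 hp.2 ha hb hab) (hc.comp (by fun_prop) hcombo) ?_ ?_
  · exact ((hc.comp continuousOn_fst hfst).const_smul a).add
      ((hc.comp continuousOn_snd hsnd).const_smul b)
  · rw [closure_prod_eq]; exact ⟨hx, hy⟩

theorem add_mul_sub_le_of_convexOn {s : Set ℝ} {b : ℝ → ℝ} (hb : ConvexOn ℝ s b) {x y c : ℝ}
    (hx : x ∈ s) (hy : y ∈ s) (hc : HasDerivAt b c y) : b y + c * (x - y) ≤ b x := by
  rcases lt_trichotomy x y with hxy | rfl | hxy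
  · have hslope := hb.slope_le_of_hasDerivAt hx hy hxy hc
    rw [slope_def_field, div_le_iff₀ (sub_pos.2 hxy)] at hslope
    linarith
  · simp
  · have hslope := hb.le_slope_of_hasDerivAt hy hx hxy hc
    rw [slope_def_field, le_div_iff₀ (sub_pos.2 hxy)] at hslope
    linarith

end Convex

section IsFibreMin

variable {E : Type*} [AddCommGroup E] [Module ℝ E]

/-- `S` minimizes `H` over the fibre `{R ∈ K | R - Q ∈ N}` of `Q`. With `K` the simplex, `N = N(f)`
gives the projection `Π_Q`, and `N = ℝ ∙ u` the projection `Π_u(Q)`. -/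
structure IsFibreMin (H : E → ℝ) (K : Set E) (N : Submodule ℝ E) (Q S : E) : Prop where
  mem : S ∈ K
  sub_mem : S - Q ∈ N
  le : ∀ R ∈ K, R - Q ∈ N → H S ≤ H R

variable {H : E → ℝ} {K : Set E} {N N' : Submodule ℝ E} {Q S T : E}

theorem isFibreMin_span_singleton_iff {Z : Type*} {H : (Z → ℝ) → ℝ} {K : Set (Z → ℝ)}
    {u Q S : Z → ℝ} :
    IsFibreMin H K (ℝ ∙ u) Q S ↔ S ∈ K ∧ (∃ t : ℝ, ∀ z, S z - Q z = t * u z) ∧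
      ∀ R ∈ K, (∃ t : ℝ, ∀ z, R z - Q z = t * u z) → H S ≤ H R := by
  have hline (R : Z → ℝ) : R - Q ∈ ℝ ∙ u ↔ ∃ t : ℝ, ∀ z, R z - Q z = t * u z := by
    simp [Submodule.mem_span_singleton, funext_iff, eq_comm]
  simp only [← hline]
  exact ⟨fun h ↦ ⟨h.mem, h.sub_mem, h.le⟩, fun h ↦ ⟨h.1, h.2.1, h.2.2⟩⟩

namespace IsFibreMin

theorem le_self (hS : IsFibreMin H K N Q S) (hQ : Q ∈ K) : H S ≤ H Q :=
  hS.le Q hQ (by simp)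

theorem le_of_submodule_le (hS : IsFibreMin H K N Q S) (hT : IsFibreMin H K N' Q T) (hN : N' ≤ N) :
    H S ≤ H T :=
  hS.le T hT.mem (hN hT.sub_mem)

theorem exists_pos_smul_of_lt (hT : IsFibreMin H K (ℝ ∙ (Q - S)) Q T) (hH : ConvexOn ℝ K H)
    (hS : S ∈ K) (hSQ : H S < H Q) : ∃ c : ℝ, 0 < c ∧ Q - T = c • (Q - S) := by
  obtain ⟨t, ht⟩ := Submodule.mem_span_singleton.1 hT.sub_mem
  refine ⟨-t, ?_, by rw [neg_smul, ht, neg_sub]⟩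
  by_contra! ht0
  replace ht0 : 0 ≤ t := by linarith
  have hTS : H T ≤ H S :=
    hT.le S hS (Submodule.mem_span_singleton.2 ⟨-1, by simp⟩)
  have hQ : Q ∈ segment ℝ T S := by
    refine ⟨(1 + t)⁻¹, t * (1 + t)⁻¹, by positivity, by positivity, by field_simp, ?_⟩
    rw [eq_add_of_sub_eq ht.symm]
    match_scalars <;> field_simp <;> ring
  exact (hSQ.trans_le (hH.le_max_of_mem_segment hT.mem hS hQ)).ne' (max_eq_right hTS)

theorem exists_of_isCompact [TopologicalSpace E] [IsTopologicalAddGroup E] (hK : IsCompact K)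
    (hH : ContinuousOn H K) (hN : IsClosed (N : Set E)) (hQ : Q ∈ K) :
    ∃ S, IsFibreMin H K N Q S := by
  have hclosed : IsClosed {R | R - Q ∈ N} := hN.preimage (continuous_id.sub continuous_const)
  obtain ⟨S, hS, hmin⟩ := (hK.inter_right hclosed).exists_isMinOn ⟨Q, hQ, by simp⟩
    (hH.mono inter_subset_left)
  exact ⟨S, hS.1, hS.2, fun R hR hRQ ↦ hmin ⟨hR, hRQ⟩⟩

end IsFibreMin

end IsFibreMin

section Duality

variable {E ι : Type*} [AddCommGroup E] [Module ℝ E] [Fintype ι]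
  {H : E → ℝ} {K : Set E} {Q R S : E}

/-- The Lagrangian of minimizing `H R` over `R ∈ K` subject to `L R = L Q`, with multiplier `θ`. It
is `EReal`-valued so that its suprema over `θ` exist. -/
def lagrangian (H : E → ℝ) (L : E → ι → ℝ) (Q R : E) (θ : ι → ℝ) : EReal :=
  (H R + θ ⬝ᵥ (L Q - L R) : ℝ)

theorem IsFibreMin.le_iSup_lagrangian {L : E →ₗ[ℝ] ι → ℝ}
    (hS : IsFibreMin H K (LinearMap.ker L) Q S) (hR : R ∈ K) :
    (H S : EReal) ≤ ⨆ θ ∈ univ, lagrangian H L Q R θ := by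
  set y := L Q - L R with hy
  obtain ⟨c, hc⟩ : ∃ c : ℝ, H S ≤ H R + (c • y) ⬝ᵥ y := by
    by_cases hy0 : y = 0
    · have hRQ : R - Q ∈ LinearMap.ker L := by
        rw [LinearMap.mem_ker, map_sub, ← neg_sub, ← hy, hy0, neg_zero]
      exact ⟨0, by simpa using hS.le R hR hRQ⟩
    · have hyy : y ⬝ᵥ y ≠ 0 := dotProduct_self_eq_zero.not.2 hy0
      exact ⟨(H S - H R) / (y ⬝ᵥ y), by rw [smul_dotProduct, smul_eq_mul]; field_simp; linarith⟩
  exact le_iSup₂_of_le (c • y) (mem_univ _) (EReal.coe_le_coe_iff.2 hc)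

variable [TopologicalSpace E] [IsTopologicalAddGroup E] [ContinuousSMul ℝ E]

theorem iInf_iSup_lagrangian (hK : IsCompact K) (hK₀ : K.Nonempty)
    (hHc : LowerSemicontinuousOn H K) (hH : ConvexOn ℝ K H) (L : E →L[ℝ] ι → ℝ) (Q : E) :
    ⨅ R ∈ K, ⨆ θ ∈ univ, lagrangian H L Q R θ = ⨆ θ ∈ univ, ⨅ R ∈ K, lagrangian H L Q R θ := by
  have hcoe : Monotone ((↑) : ℝ → EReal) := EReal.coe_strictMono.monotone
  refine Sion.minimax' hK₀ hH.1 hK (fun θ _ ↦ ?lsc) (fun θ _ ↦ ?quasiconvex) convex_univ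
    (fun R _ ↦ ?usc) (fun R _ ↦ ?quasiconcave)
  case lsc =>
    have hlin : Continuous fun R ↦ θ ⬝ᵥ (L Q - L R) := by fun_prop
    exact continuous_coe_real_ereal.comp_lowerSemicontinuousOn
      (hHc.add (hlin.lowerSemicontinuous.lowerSemicontinuousOn K)) hcoe
  case quasiconvex =>
    refine (hH.add ⟨hH.1, fun R _ R' _ a b _ _ hab ↦ le_of_eq ?_⟩).quasiconvexOn.monotone_comp hcoe
    simp only [map_add, map_smul, dotProduct_sub, dotProduct_add, dotProduct_smul, smul_eq_mul]
    linear_combination (-(θ ⬝ᵥ L Q)) * hab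
  case usc =>
    have hlin : Continuous fun θ ↦ H R + θ ⬝ᵥ (L Q - L R) := by fun_prop
    exact (continuous_coe_real_ereal.comp hlin).upperSemicontinuous.upperSemicontinuousOn univ
  case quasiconcave =>
    have hlin : ConcaveOn ℝ univ fun θ ↦ H R + θ ⬝ᵥ (L Q - L R) := by
      refine ⟨convex_univ, fun θ _ θ' _ a b _ _ hab ↦ le_of_eq ?_⟩
      simp only [add_dotProduct, smul_dotProduct, smul_eq_mul]
      linear_combination H R * hab
    exact hlin.quasiconcaveOn.monotone_comp hcoe

theorem IsFibreMin.exists_forall_lt_add_dotProduct {L : E →L[ℝ] ι → ℝ}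
    (hS : IsFibreMin H K (LinearMap.ker L.toLinearMap) Q S) (hK : IsCompact K)
    (hHc : LowerSemicontinuousOn H K) (hH : ConvexOn ℝ K H) {a : ℝ} (ha : a < H S) :
    ∃ θ : ι → ℝ, ∀ R ∈ K, a < H R + θ ⬝ᵥ (L Q - L R) := by
  have hsup : (a : EReal) < ⨆ θ ∈ univ, ⨅ R ∈ K, lagrangian H L Q R θ := by
    rw [← iInf_iSup_lagrangian hK ⟨S, hS.mem⟩ hHc hH L Q]
    exact (EReal.coe_lt_coe_iff.2 ha).trans_le (le_iInf₂ fun R hR ↦ hS.le_iSup_lagrangian hR)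
  obtain ⟨θ, -, hθ⟩ := lt_biSup_iff.1 hsup
  exact ⟨θ, fun R hR ↦ EReal.coe_lt_coe_iff.1 (hθ.trans_le (iInf₂_le R hR))⟩

end Duality

section DirectionalGap

variable {Z : Type*} [Fintype Z] {H : (Z → ℝ) → ℝ} {K : Set (Z → ℝ)}
  {N : Submodule ℝ (Z → ℝ)} {Q S u : Z → ℝ}

/-- The set `𝒫_u^+` of the points of `K` lying on the positive side of their projection `π Q` along
the direction `u`. -/
def positiveSide (K : Set (Z → ℝ)) (π : (Z → ℝ) → Z → ℝ) (u : Z → ℝ) : Set (Z → ℝ) :=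
  {Q | Q ∈ K ∧ 0 < (Q - π Q) ⬝ᵥ u}

/-- The number `B̄(u)`: the supremum of the gap `B_u(Q) = H Q - H (π Q)` over the closure of
`𝒫_u^+`, where `π` is the projection along `u`. -/
noncomputable def maxGap (H : (Z → ℝ) → ℝ) (K : Set (Z → ℝ)) (π : (Z → ℝ) → Z → ℝ)
    (u : Z → ℝ) : ℝ :=
  sSup ((fun Q ↦ H Q - H (π Q)) '' closure (positiveSide K π u))

theorem closure_positiveSide_subset (hK : IsClosed K) (π : (Z → ℝ) → Z → ℝ) (u : Z → ℝ) :
    closure (positiveSide K π u) ⊆ K :=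
  closure_minimal (fun _ hQ ↦ hQ.1) hK

theorem gap_le_maxGap {π : (Z → ℝ) → Z → ℝ} (hK : IsCompact K) (hH : ContinuousOn H K)
    (hπ : MapsTo π K K) (hQ : Q ∈ closure (positiveSide K π u)) :
    H Q - H (π Q) ≤ maxGap H K π u := by
  obtain ⟨M, hM⟩ := (hK.image_of_continuousOn hH).bddAbove
  obtain ⟨m, hm⟩ := (hK.image_of_continuousOn hH).bddBelow
  refine le_csSup ⟨M - m, ?_⟩ (mem_image_of_mem _ hQ)
  rintro _ ⟨R, hR, rfl⟩
  have hRK : R ∈ K := closure_positiveSide_subset hK.isClosed π u hR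
  exact sub_le_sub (hM (mem_image_of_mem H hRK)) (hm (mem_image_of_mem H (hπ hRK)))

theorem mem_positiveSide_sub {π : (Z → ℝ) → Z → ℝ} (hH : ConvexOn ℝ K H) (hQ : Q ∈ K)
    (hS : S ∈ K) (hSQ : H S < H Q) (hπ : IsFibreMin H K (ℝ ∙ (Q - S)) Q (π Q)) :
    Q ∈ positiveSide K π (Q - S) := by
  obtain ⟨c, hc, hQπ⟩ := hπ.exists_pos_smul_of_lt hH hS hSQ
  have hQS : Q - S ≠ 0 := sub_ne_zero.2 (ne_of_apply_ne H hSQ.ne')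
  refine ⟨hQ, ?_⟩
  rw [hQπ, smul_dotProduct]
  exact mul_pos hc (by simpa using dotProduct_star_self_pos_iff.2 hQS)

variable {π : (Z → ℝ) → (Z → ℝ) → Z → ℝ}

theorem IsFibreMin.sub_le_maxGap (hS : IsFibreMin H K N Q S) (hK : IsCompact K)
    (hHc : ContinuousOn H K) (hH : ConvexOn ℝ K H) (hQ : Q ∈ K)
    (hπ : ∀ v ∈ N, v ≠ 0 → ∀ R ∈ K, IsFibreMin H K (ℝ ∙ v) R (π v R))
    (humax : ∀ v ∈ N, v ≠ 0 → maxGap H K (π v) v ≤ maxGap H K (π u) u)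
    (hu₀ : 0 ≤ maxGap H K (π u) u) : H Q - H S ≤ maxGap H K (π u) u := by
  rcases (hS.le_self hQ).eq_or_lt with hSQ | hSQ
  · rwa [hSQ, sub_self]
  have hv : Q - S ∈ N := sub_mem_comm_iff.1 hS.sub_mem
  have hv₀ : Q - S ≠ 0 := sub_ne_zero.2 (ne_of_apply_ne H hSQ.ne')
  have hπv := hπ (Q - S) hv hv₀
  have hπS : H (π (Q - S) Q) ≤ H S :=
    (hπv Q hQ).le S hS.mem (sub_mem_comm_iff.1 (Submodule.mem_span_singleton_self _))
  calc
    H Q - H S ≤ H Q - H (π (Q - S) Q) := sub_le_sub_left hπS _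
    _ ≤ maxGap H K (π (Q - S)) (Q - S) :=
      gap_le_maxGap hK hHc (fun R hR ↦ (hπv R hR).mem)
        (subset_closure (mem_positiveSide_sub hH hQ hS.mem hSQ (hπv Q hQ)))
    _ ≤ maxGap H K (π u) u := humax _ hv hv₀

end DirectionalGap

section Bregman

variable {Z ι : Type*} [Fintype Z] {β β' : Z → ℝ → ℝ} {f : Matrix Z ι ℝ}
  {p : (ι → ℝ) → Z → ℝ} {Q S : Z → ℝ}

/-- The function `H` of the Bregman setup: a sum of one function of each coordinate. -/
def separableSum (β : Z → ℝ → ℝ) (Q : Z → ℝ) : ℝ :=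
  ∑ z, β z (Q z)

/-- The Bregman divergence `B(P, Q)` of `separableSum β`, where `β' z` stands for the derivative of
`β z`. -/
def bregmanDiv (β β' : Z → ℝ → ℝ) (P Q : Z → ℝ) : ℝ :=
  ∑ z, (β z (P z) - β z (Q z) - β' z (Q z) * (P z - Q z))

/-- The subspace `N(f)`: the directions joining probability vectors `P` with equal moments `P ᵥ* f`,
where `P ᵥ* f` is `μ(P)`. -/
def momentKernel (f : Matrix Z ι ℝ) : Submodule ℝ (Z → ℝ) where
  carrier := {w | ∑ z, w z = 0 ∧ w ᵥ* f = 0}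
  zero_mem' := by simp
  add_mem' := by
    rintro v w ⟨hv, hvf⟩ ⟨hw, hwf⟩
    simp [Finset.sum_add_distrib, add_vecMul, hv, hvf, hw, hwf]
  smul_mem' := by
    rintro c w ⟨hw, hwf⟩
    simp [← Finset.mul_sum, smul_vecMul, hw, hwf]

theorem IsFibreMin.ker_of_momentKernel {H : (Z → ℝ) → ℝ}
    (hS : IsFibreMin H (stdSimplex ℝ Z) (momentKernel f) Q S) (hQ : Q ∈ stdSimplex ℝ Z) :
    IsFibreMin H (stdSimplex ℝ Z) (LinearMap.ker f.vecMulLinear) Q S where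
  mem := hS.mem
  sub_mem := hS.sub_mem.2
  le R hR hRQ := hS.le R hR ⟨by simp [hR.2, hQ.2], hRQ⟩

variable [Fintype ι]

/-- `θ ↦ p θ` parametrizes the Bregman family `ℰ` of positive probability vectors. The formula
`p θ z = e_z(⟨θ, f z⟩ - Λ(θ))` is encoded by applying `β' z` to both sides, with `r` for `Λ(θ)`. -/
structure IsBregmanFamily (β' : Z → ℝ → ℝ) (f : Matrix Z ι ℝ) (p : (ι → ℝ) → Z → ℝ) : Prop where
  pos : ∀ θ z, 0 < p θ z
  sum_eq_one : ∀ θ, ∑ z, p θ z = 1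
  exists_eq : ∀ θ, ∃ r, ∀ z, β' z (p θ z) = θ ⬝ᵥ f z - r

theorem continuousOn_separableSum (hβ : ∀ z, ContinuousOn (β z) (Ici 0)) :
    ContinuousOn (separableSum β) (stdSimplex ℝ Z) :=
  continuousOn_finsetSum _ fun z _ ↦
    (hβ z).comp (continuous_apply z).continuousOn fun _ hQ ↦ hQ.1 z

theorem convexOn_separableSum (hβ : ∀ z, ConvexOn ℝ (Ici 0) (β z)) :
    ConvexOn ℝ (stdSimplex ℝ Z) (separableSum β) := by
  refine ⟨convex_stdSimplex ℝ Z, fun Q hQ R hR a b ha hb hab ↦ ?_⟩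
  simp only [separableSum, Finset.smul_sum, ← Finset.sum_add_distrib]
  exact Finset.sum_le_sum fun z _ ↦ (hβ z).2 (hQ.1 z) (hR.1 z) ha hb hab

theorem bregmanDiv_nonneg (hβ : ∀ z, ConvexOn ℝ (Ici 0) (β z))
    (hβd : ∀ z x, 0 < x → HasDerivAt (β z) (β' z x) x) {P : Z → ℝ} (hP : ∀ z, 0 ≤ P z)
    (hQ : ∀ z, 0 < Q z) : 0 ≤ bregmanDiv β β' P Q :=
  Finset.sum_nonneg fun z _ ↦ by
    linarith [add_mul_sub_le_of_convexOn (hβ z) (hP z) (hQ z).le (hβd z _ (hQ z))]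

namespace IsBregmanFamily

theorem of_rightInverse {e : Z → ℝ → ℝ} {Λ : (ι → ℝ) → ℝ} (he_pos : ∀ z r, 0 < e z r)
    (he : ∀ z, Function.RightInverse (e z) (β' z)) (hΛ : ∀ θ, ∑ z, e z (θ ⬝ᵥ f z - Λ θ) = 1)
    (hp : ∀ θ z, p θ z = e z (θ ⬝ᵥ f z - Λ θ)) : IsBregmanFamily β' f p where
  pos θ z := hp θ z ▸ he_pos z _
  sum_eq_one θ := by simpa only [hp] using hΛ θ
  exists_eq θ := ⟨Λ θ, fun z ↦ by rw [hp, he z]⟩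

theorem mem_stdSimplex (hp : IsBregmanFamily β' f p) (θ : ι → ℝ) : p θ ∈ stdSimplex ℝ Z :=
  ⟨fun z ↦ (hp.pos θ z).le, hp.sum_eq_one θ⟩

theorem bregmanDiv_eq (hp : IsBregmanFamily β' f p) (hQ : ∑ z, Q z = 1) (θ : ι → ℝ) :
    bregmanDiv β β' Q (p θ) =
      separableSum β Q - (separableSum β (p θ) + θ ⬝ᵥ (Q ᵥ* f - p θ ᵥ* f)) := by
  obtain ⟨r, hr⟩ := hp.exists_eq θ
  have hlinear : ∑ z, β' z (p θ z) * (Q z - p θ z) = θ ⬝ᵥ (Q ᵥ* f - p θ ᵥ* f) := calc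
    ∑ z, β' z (p θ z) * (Q z - p θ z)
        = ∑ z, (Q z - p θ z) * (f z ⬝ᵥ θ) - r * (∑ z, Q z - ∑ z, p θ z) := by
      rw [← Finset.sum_sub_distrib, Finset.mul_sum, ← Finset.sum_sub_distrib]
      refine Finset.sum_congr rfl fun z _ ↦ ?_
      rw [hr, dotProduct_comm]
      ring
    _ = (Q - p θ) ⬝ᵥ f *ᵥ θ := by
      rw [hQ, hp.sum_eq_one, sub_self, mul_zero, sub_zero]
      rfl
    _ = θ ⬝ᵥ (Q ᵥ* f - p θ ᵥ* f) := by
      rw [dotProduct_mulVec, sub_vecMul, dotProduct_comm]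
  rw [bregmanDiv, Finset.sum_sub_distrib, Finset.sum_sub_distrib, hlinear, sub_sub]
  rfl

theorem bregmanDiv_eq_sub_add (hp : IsBregmanFamily β' f p) (hQ : ∑ z, Q z = 1)
    (hSQ : S - Q ∈ momentKernel f) (θ : ι → ℝ) :
    bregmanDiv β β' Q (p θ) =
      separableSum β Q - separableSum β S + bregmanDiv β β' S (p θ) := by
  have hsum : ∑ z, S z = 1 := by
    rw [← hQ, ← sub_eq_zero, ← Finset.sum_sub_distrib]
    exact hSQ.1
  have hmoment : S ᵥ* f = Q ᵥ* f := by
    rw [← sub_eq_zero, ← sub_vecMul]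
    exact hSQ.2
  rw [hp.bregmanDiv_eq hQ, hp.bregmanDiv_eq hsum, hmoment]
  ring

theorem iInf_bregmanDiv (hp : IsBregmanFamily β' f p)
    (hβc : ∀ z, ContinuousOn (β z) (Ici 0)) (hβ : ∀ z, ConvexOn ℝ (Ici 0) (β z))
    (hβd : ∀ z x, 0 < x → HasDerivAt (β z) (β' z x) x) (hQ : Q ∈ stdSimplex ℝ Z)
    (hS : IsFibreMin (separableSum β) (stdSimplex ℝ Z) (momentKernel f) Q S) :
    ⨅ θ, bregmanDiv β β' Q (p θ) = separableSum β Q - separableSum β S := by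
  refine ciInf_eq_of_forall_ge_of_forall_gt_exists_lt (fun θ ↦ ?_) fun w hw ↦ ?_
  · rw [hp.bregmanDiv_eq_sub_add hQ.2 hS.sub_mem]
    exact le_add_of_nonneg_right (bregmanDiv_nonneg hβ hβd hS.mem.1 (hp.pos θ))
  · obtain ⟨θ, hθ⟩ := (hS.ker_of_momentKernel hQ).exists_forall_lt_add_dotProduct
      (L := f.vecMulLinear.toContinuousLinearMap) (isCompact_stdSimplex ℝ Z)
      (continuousOn_separableSum hβc).lowerSemicontinuousOn (convexOn_separableSum hβ)
      (sub_lt_comm.1 hw)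
    refine ⟨θ, ?_⟩
    rw [hp.bregmanDiv_eq hQ.2]
    exact sub_lt_comm.1 (hθ (p θ) (hp.mem_stdSimplex θ))

end IsBregmanFamily

end Bregman

theorem stmt_17_general {Z ι : Type*} [Fintype Z] [Fintype ι] {β β' : Z → ℝ → ℝ}
    (hβc : ∀ z, ContinuousOn (β z) (Ici 0)) (hβ : ∀ z, ConvexOn ℝ (Ioi 0) (β z))
    (hβd : ∀ z x, 0 < x → HasDerivAt (β z) (β' z x) x) {f : Matrix Z ι ℝ}
    {p : (ι → ℝ) → Z → ℝ} (hp : IsBregmanFamily β' f p) {π : (Z → ℝ) → (Z → ℝ) → Z → ℝ}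
    (hπ : ∀ v ∈ momentKernel f, v ≠ 0 → ∀ Q ∈ stdSimplex ℝ Z,
      IsFibreMin (separableSum β) (stdSimplex ℝ Z) (ℝ ∙ v) Q (π v Q))
    {u : Z → ℝ} (hu : u ∈ momentKernel f) (hu₀ : u ≠ 0)
    (humax : ∀ v ∈ momentKernel f, v ≠ 0 →
      maxGap (separableSum β) (stdSimplex ℝ Z) (π v) v ≤
        maxGap (separableSum β) (stdSimplex ℝ Z) (π u) u)
    {P : Z → ℝ} (hP : P ∈ closure (positiveSide (stdSimplex ℝ Z) (π u) u))
    (hPmax : separableSum β P - separableSum β (π u P) =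
      maxGap (separableSum β) (stdSimplex ℝ Z) (π u) u) :
    P ∈ stdSimplex ℝ Z ∧
      (∀ Q ∈ stdSimplex ℝ Z, ⨅ θ, bregmanDiv β β' Q (p θ) ≤ ⨅ θ, bregmanDiv β β' P (p θ)) ∧
      ⨅ θ, bregmanDiv β β' P (p θ) = maxGap (separableSum β) (stdSimplex ℝ Z) (π u) u := by
  have hconv (z : Z) : ConvexOn ℝ (Ici 0) (β z) := by
    rw [← closure_Ioi]
    exact convexOn_closure_of_continuousOn (hβ z) (by rw [closure_Ioi]; exact hβc z)
  have hK := isCompact_stdSimplex ℝ Z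
  have hPK : P ∈ stdSimplex ℝ Z := closure_positiveSide_subset hK.isClosed _ _ hP
  have hHc := continuousOn_separableSum hβc
  have hmin (Q) (hQ : Q ∈ stdSimplex ℝ Z) := IsFibreMin.exists_of_isCompact hK hHc
    (momentKernel f).closed_of_finiteDimensional hQ
  have hmax₀ : 0 ≤ maxGap (separableSum β) (stdSimplex ℝ Z) (π u) u :=
    hPmax ▸ sub_nonneg.2 ((hπ u hu hu₀ P hPK).le_self hPK)
  have hle (Q) (hQ : Q ∈ stdSimplex ℝ Z) :
      ⨅ θ, bregmanDiv β β' Q (p θ) ≤ maxGap (separableSum β) (stdSimplex ℝ Z) (π u) u := by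
    obtain ⟨S, hS⟩ := hmin Q hQ
    rw [hp.iInf_bregmanDiv hβc hconv hβd hQ hS]
    exact hS.sub_le_maxGap hK hHc (convexOn_separableSum hconv) hQ hπ humax hmax₀
  have hge : maxGap (separableSum β) (stdSimplex ℝ Z) (π u) u ≤ ⨅ θ, bregmanDiv β β' P (p θ) := by
    obtain ⟨S, hS⟩ := hmin P hPK
    rw [hp.iInf_bregmanDiv hβc hconv hβd hPK hS, ← hPmax]
    refine sub_le_sub_left (hS.le_of_submodule_le (hπ u hu hu₀ P hPK) ?_) _
    rwa [Submodule.span_singleton_le_iff_mem]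
  exact ⟨hPK, fun Q hQ ↦ (hle Q hQ).trans hge, (hle P hPK).antisymm hge⟩

theorem stmt_17 {Z : Type} [Fintype Z] [Nonempty Z] {d : ℕ}
    (β β' : Z → ℝ → ℝ)
    (hβc : ∀ z, ContinuousOn (β z) (Set.Ici 0))
    (hβsc : ∀ z, StrictConvexOn ℝ (Set.Ioi 0) (β z))
    (hβd : ∀ z x, 0 < x → HasDerivAt (β z) (β' z x) x)
    (hβ'bot : ∀ z, Filter.Tendsto (β' z) (nhdsWithin 0 (Set.Ioi 0)) Filter.atBot)
    (hβ'top : ∀ z, Filter.Tendsto (β' z) Filter.atTop Filter.atTop)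
    (e : Z → ℝ → ℝ)
    (he_pos : ∀ z r, 0 < e z r)
    (he_left : ∀ z r, β' z (e z r) = r)
    (he_right : ∀ z x, 0 < x → e z (β' z x) = x)
    (f : Z → Fin d → ℝ)
    (prob : Set (Z → ℝ))
    (hprob : prob = {P : Z → ℝ | (∀ z, 0 ≤ P z) ∧ (∑ z, P z) = 1})
    (μ : (Z → ℝ) → Fin d → ℝ)
    (hμ : ∀ P i, μ P i = ∑ z, P z * f z i)
    (H : (Z → ℝ) → ℝ)
    (hH : ∀ Q, H Q = ∑ z, β z (Q z))
    (Λ : (Fin d → ℝ) → ℝ)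
    (hΛ : ∀ θ, (∑ z, e z ((∑ i, θ i * f z i) - Λ θ)) = 1)
    (Pθ : (Fin d → ℝ) → Z → ℝ)
    (hPθ : ∀ θ z, Pθ θ z = e z ((∑ i, θ i * f z i) - Λ θ))
    (Bdiv : (Z → ℝ) → (Z → ℝ) → ℝ)
    (hBdiv : ∀ P Q, Bdiv P Q = ∑ z, (β z (P z) - β z (Q z) - β' z (Q z) * (P z - Q z)))
    (BE : (Z → ℝ) → ℝ)
    (hBE : ∀ P, BE P = ⨅ θ, Bdiv P (Pθ θ))
    (Pr : (Z → ℝ) → Z → ℝ)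
    (hPr : ∀ P ∈ prob, Pr P ∈ prob ∧ μ (Pr P) = μ P ∧
      (∀ Q ∈ prob, μ Q = μ P → H (Pr P) ≤ H Q) ∧
      (∀ Q ∈ prob, μ Q = μ P → H Q = H (Pr P) → Q = Pr P))
    (Pru : (Z → ℝ) → (Z → ℝ) → Z → ℝ)
    (hPru : ∀ u : Z → ℝ, (∑ z, u z) = 0 → u ≠ 0 → ∀ Q ∈ prob,
      Pru u Q ∈ prob ∧ (∃ t : ℝ, ∀ z, Pru u Q z - Q z = t * u z) ∧
      (∀ R ∈ prob, (∃ t : ℝ, ∀ z, R z - Q z = t * u z) → H (Pru u Q) ≤ H R) ∧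
      (∀ R ∈ prob, (∃ t : ℝ, ∀ z, R z - Q z = t * u z) → H R = H (Pru u Q) → R = Pru u Q))
    (Pplus : (Z → ℝ) → Set (Z → ℝ))
    (hPplus : ∀ u, Pplus u = {Q | Q ∈ prob ∧ 0 < ∑ z, (Q z - Pru u Q z) * u z})
    (Bu : (Z → ℝ) → (Z → ℝ) → ℝ)
    (hBu : ∀ u Q, Bu u Q = H Q - H (Pru u Q))
    (Bbar : (Z → ℝ) → ℝ)
    (hBbar : ∀ u, Bbar u = sSup (Bu u '' closure (Pplus u)))
    (N : Set (Z → ℝ))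
    (hNdef : N = {w : Z → ℝ | (∑ z, w z) = 0 ∧ ∀ i, (∑ z, w z * f z i) = 0})
    (u : Z → ℝ) (hu : u ∈ N \ {0})
    (humax : ∀ v ∈ N \ {0}, Bbar v ≤ Bbar u)
    (P : Z → ℝ) (hPcl : P ∈ closure (Pplus u))
    (hPmax : Bu u P = Bbar u) :
    P ∈ prob ∧ (∀ Q ∈ prob, BE Q ≤ BE P) ∧ BE P = Bbar u := by
  obtain rfl : H = separableSum β := funext hH
  obtain rfl : Bdiv = bregmanDiv β β' := funext₂ hBdiv
  obtain rfl : Bu = fun u Q ↦ separableSum β Q - separableSum β (Pru u Q) := funext₂ hBu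
  obtain rfl : Pplus = fun u ↦ positiveSide (stdSimplex ℝ Z) (Pru u) u :=
    funext fun u ↦ by rw [hPplus, hprob]; rfl
  obtain rfl : N = momentKernel f := by
    rw [hNdef]; exact Set.ext fun w ↦ and_congr_right' funext_iff.symm
  obtain rfl : Bbar = fun u ↦ maxGap (separableSum β) (stdSimplex ℝ Z) (Pru u) u := funext hBbar
  obtain rfl : prob = stdSimplex ℝ Z := hprob
  have hπ (v) (hv : v ∈ momentKernel f) (hv₀ : v ≠ 0) (Q) (hQ : Q ∈ stdSimplex ℝ Z) :
      IsFibreMin (separableSum β) (stdSimplex ℝ Z) (ℝ ∙ v) Q (Pru v Q) :=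
    have ⟨hmem, hline, hle, _⟩ := hPru v hv.1 hv₀ Q hQ
    isFibreMin_span_singleton_iff.2 ⟨hmem, hline, hle⟩
  simp only [hBE]
  exact stmt_17_general hβc (fun z ↦ (hβsc z).convexOn) hβd (.of_rightInverse he_pos he_left hΛ hPθ)
    hπ hu.1 hu.2 (fun v hv hv₀ ↦ humax v ⟨hv, hv₀⟩) hPcl hPmax
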